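/- Let p > 1 and a, b, L > 0, and let u and v be two C¹ weak solutions of −Δ^{a,b}_p w = λ^{a,b}_{1,p}(0,L) |w|^{p−2} w on (0,L) with w(0) = w(L) = 0, both positive on (0,L). Then there exists a constant c > 0 such that v = c·u; in particular, if ∫₀^L |u|^p dt = ∫₀^L |v|^p dt = 1, then u = v. -/

import Mathlib

open Set

/-- `u` is C¹ on `[α, γ]` with derivative `u'` there. -/
def C1On (α γ : ℝ) (u u' : ℝ → ℝ) : Prop :=
  (∀ t ∈ Set.Icc α γ, HasDerivWithinAt u (u' t) (Set.Icc α γ) t) ∧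
  ContinuousOn u' (Set.Icc α γ)

/-- Admissible functions on `[0, L]`: C¹ with zero boundary values. -/
def Adm (L : ℝ) (u u' : ℝ → ℝ) : Prop :=
  C1On 0 L u u' ∧ u 0 = 0 ∧ u L = 0

/-- The asymmetric energy integrand `a^p (s⁺)^p + b^p (s⁻)^p`. -/
noncomputable def asymE (p a b s : ℝ) : ℝ :=
  a ^ p * (max s 0) ^ p + b ^ p * (max (-s) 0) ^ p

/-- The asymmetric flux `a^p (s⁺)^(p-1) - b^p (s⁻)^(p-1)`. -/
noncomputable def asymFlux (p a b s : ℝ) : ℝ :=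
  a ^ p * (max s 0) ^ (p - 1) - b ^ p * (max (-s) 0) ^ (p - 1)

/-- The first Dirichlet eigenvalue `λ^{a,b}_{1,p}(0,L)`, as the infimum of the
asymmetric energy over normalized admissible functions. -/
noncomputable def lam1 (p a b L : ℝ) : ℝ :=
  sInf { E : ℝ | ∃ u u' : ℝ → ℝ, Adm L u u' ∧
    (∫ t in (0:ℝ)..L, |u t| ^ p) = 1 ∧
    E = ∫ t in (0:ℝ)..L, asymE p a b (u' t) }

/-- `u` (a C¹ function on `[0,L]` with derivative `u'` and zero boundary values)
is a weak solution of `-Δ^{a,b}_p u = g` on `(0,L)`. -/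
def IsWeakSol (p a b L : ℝ) (u u' g : ℝ → ℝ) : Prop :=
  Adm L u u' ∧
  ∀ φ φ' : ℝ → ℝ, Adm L φ φ' →
    (∫ t in (0:ℝ)..L, asymFlux p a b (u' t) * φ' t) =
      ∫ t in (0:ℝ)..L, g t * φ t

open Set Filter Topology MeasureTheory

lemma asymFlux_cont (p a b : ℝ) (hp : 1 < p) : Continuous (asymFlux p a b) := by
  unfold asymFlux
  have h : 0 ≤ p - 1 := by linarith
  exact ((continuous_const.mul ((continuous_id.max continuous_const).rpow_const
    (fun _ => Or.inr h))).sub (continuous_const.mul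
      ((continuous_neg.max continuous_const).rpow_const (fun _ => Or.inr h))))

lemma flux_pos {p a b s : ℝ} (hp : 1 < p) (hs : 0 < s) :
    asymFlux p a b s = a ^ p * s ^ (p - 1) := by
  unfold asymFlux
  rw [max_eq_left hs.le, max_eq_right (by linarith), Real.zero_rpow (by linarith)]; ring

lemma flux_zero {p a b : ℝ} (hp : 1 < p) : asymFlux p a b 0 = 0 := by
  unfold asymFlux
  simp [Real.zero_rpow (show p - 1 ≠ 0 by linarith)]

lemma flux_neg {p a b s : ℝ} : asymFlux p a b (-s) = - asymFlux p b a s := by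
  unfold asymFlux
  rw [neg_neg]; ring

lemma asymE_neg {p a b s : ℝ} : asymE p a b (-s) = asymE p b a s := by
  unfold asymE
  rw [neg_neg]; ring

lemma E_pos {p a b s : ℝ} (hp : 1 < p) (hs : 0 < s) :
    asymE p a b s = a ^ p * s ^ p := by
  unfold asymE
  rw [max_eq_left hs.le, max_eq_right (by linarith), Real.zero_rpow (by linarith)]; ring

lemma E_zero {p a b : ℝ} (hp : 1 < p) : asymE p a b 0 = 0 := by
  unfold asymE
  simp [Real.zero_rpow (show p ≠ 0 by linarith)]

lemma E_nonneg {p a b s : ℝ} (ha : 0 < a) (hb : 0 < b) : 0 ≤ asymE p a b s := by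
  unfold asymE
  positivity

lemma E_eq {p a b s : ℝ} (hp : 1 < p) : asymE p a b s = s * asymFlux p a b s := by
  have key : ∀ {a b s : ℝ}, 0 < s → asymE p a b s = s * asymFlux p a b s := by
    intro a b s hs
    rw [E_pos hp hs, flux_pos hp hs, Real.rpow_sub_one hs.ne']
    field_simp
  rcases lt_trichotomy s 0 with h | h | h
  · have := key (a := b) (b := a) (s := -s) (by linarith)
    rw [asymE_neg, flux_neg] at this
    linarith
  · subst h; rw [E_zero hp]; simp
  · exact key h

lemma flux_pos_of_pos {p a b s : ℝ} (hp : 1 < p) (ha : 0 < a) (hs : 0 < s) :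
    0 < asymFlux p a b s := by
  rw [flux_pos hp hs]; positivity

lemma flux_neg_of_neg {p a b s : ℝ} (hp : 1 < p) (hb : 0 < b) (hs : s < 0) :
    asymFlux p a b s < 0 := by
  have := flux_pos_of_pos (b := a) (s := -s) hp hb (by linarith)
  rw [flux_neg] at this; linarith

lemma flux_hom {p a b r s : ℝ} (hr : 0 < r) :
    asymFlux p a b (r * s) = r ^ (p - 1) * asymFlux p a b s := by
  unfold asymFlux
  have h1 : max (r * s) 0 = r * max s 0 := by
    rw [mul_max_of_nonneg _ _ hr.le, mul_zero]
  have h2 : max (-(r * s)) 0 = r * max (-s) 0 := by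
    rw [mul_max_of_nonneg _ _ hr.le, mul_zero, mul_neg]
  rw [h1, h2, Real.mul_rpow hr.le (le_max_right _ _), Real.mul_rpow hr.le (le_max_right _ _)]
  ring

lemma picone_pos {p a b x y : ℝ} (hp : 1 < p) (ha : 0 < a) (hb : 0 < b) (hy : 0 < y)
    (hxy : x ≠ y) :
    0 < asymE p a b x - p * asymFlux p a b y * x + (p - 1) * (y * asymFlux p a b y) := by
  have hfy := flux_pos_of_pos (b := b) hp ha hy
  rcases le_or_gt x 0 with hx | hx
  · have h1 := E_nonneg (p := p) (s := x) ha hb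
    have h2 : 0 ≤ p * asymFlux p a b y * (-x) := by
      apply mul_nonneg <;> [positivity; linarith]
    have h3 : 0 < (p - 1) * (y * asymFlux p a b y) := by
      apply mul_pos <;> [linarith; positivity]
    linarith
  · have hz : x / y - 1 ≠ 0 := by
      intro h
      apply hxy
      field_simp at h
      linarith
    have hB := one_add_mul_self_lt_rpow_one_add (s := x / y - 1) (p := p)
      (by have := div_pos hx hy; linarith) hz hp
    rw [add_sub_cancel, Real.div_rpow hx.le hy.le] at hB
    rw [E_pos hp hx, flux_pos hp hy, Real.rpow_sub_one hy.ne']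
    have hyp : 0 < y ^ p := by positivity
    have hap : 0 < a ^ p := by positivity
    have h4 : 0 < a ^ p * y ^ p * (x ^ p / y ^ p - (1 + p * (x / y - 1))) := by
      apply mul_pos <;> [positivity; linarith]
    have e : a ^ p * y ^ p * (x ^ p / y ^ p - (1 + p * (x / y - 1)))
      = a ^ p * x ^ p - p * (a ^ p * (y ^ p / y)) * x
        + (p - 1) * (y * (a ^ p * (y ^ p / y))) := by
      field_simp
      ring
    linarith

lemma picone_lt {p a b x y : ℝ} (hp : 1 < p) (ha : 0 < a) (hb : 0 < b) (hxy : x ≠ y) :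
    0 < asymE p a b x - p * asymFlux p a b y * x + (p - 1) * (y * asymFlux p a b y) := by
  rcases lt_trichotomy y 0 with h | h | h
  · have := picone_pos (x := -x) (y := -y) hp hb ha (by linarith) (by simpa using hxy)
    rw [asymE_neg, flux_neg] at this
    linarith
  · subst h
    rw [flux_zero hp, E_eq hp]
    rcases lt_or_gt_of_ne hxy with hx | hx
    · have := mul_pos_of_neg_of_neg hx (flux_neg_of_neg (a := a) hp hb hx)
      linarith
    · have := mul_pos hx (flux_pos_of_pos (b := b) hp ha hx)
      linarith
  · exact picone_pos hp ha hb h hxy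

lemma picone_le {p a b x y : ℝ} (hp : 1 < p) (ha : 0 < a) (hb : 0 < b) :
    0 ≤ asymE p a b x - p * asymFlux p a b y * x + (p - 1) * (y * asymFlux p a b y) := by
  by_cases h : x = y
  · subst h; rw [E_eq hp]; apply le_of_eq; ring
  · exact (picone_lt hp ha hb h).le

lemma dbr (L : ℝ) (hL : 0 < L) (f g : ℝ → ℝ) (hf : Continuous f) (hg : Continuous g)
    (h : ∀ φ φ' : ℝ → ℝ, Adm L φ φ' →
      (∫ t in (0:ℝ)..L, f t * φ' t) = ∫ t in (0:ℝ)..L, g t * φ t) :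
    ∃ m : ℝ, ∀ t ∈ Icc (0:ℝ) L, f t = m - ∫ s in (0:ℝ)..t, g s := by
  set G : ℝ → ℝ := fun t => ∫ s in (0:ℝ)..t, g s with hG
  have hGd : ∀ t, HasDerivAt G (g t) t := fun t => hg.integral_hasStrictDerivAt 0 t |>.hasDerivAt
  have hGc : Continuous G := continuous_iff_continuousAt.2 fun t => (hGd t).continuousAt
  set k : ℝ → ℝ := fun t => f t + G t with hk
  have hkc : Continuous k := hf.add hGc
  set m : ℝ := (∫ t in (0:ℝ)..L, k t) / L with hm
  set φ : ℝ → ℝ := fun t => ∫ s in (0:ℝ)..t, (k s - m) with hφ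
  have hkm : Continuous fun t => k t - m := hkc.sub continuous_const
  have hφd : ∀ t, HasDerivAt φ (k t - m) t :=
    fun t => hkm.integral_hasStrictDerivAt 0 t |>.hasDerivAt
  have hφc : Continuous φ := continuous_iff_continuousAt.2 fun t => (hφd t).continuousAt
  have hφ0 : φ 0 = 0 := by simp [hφ]
  have hφL : φ L = 0 := by
    simp only [hφ]
    rw [intervalIntegral.integral_sub (hkc.intervalIntegrable _ _) (by simp)]
    simp [hm]
    field_simp
    simp
  have h1 := h φ (fun t => k t - m)
    ⟨⟨fun t _ => (hφd t).hasDerivWithinAt, hkm.continuousOn⟩, hφ0, hφL⟩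
  have h2 := intervalIntegral.integral_mul_deriv_eq_deriv_mul (a := 0) (b := L)
    (u := G) (v := φ) (u' := g) (v' := fun t => k t - m)
    (fun t _ => hGd t) (fun t _ => hφd t) (hg.intervalIntegrable _ _) (hkm.intervalIntegrable _ _)
  rw [hφ0, hφL] at h2
  have h3 : ∫ t in (0:ℝ)..L, (k t - m) ^ 2 = 0 := by
    have e : ∀ t, (k t - m) ^ 2 = f t * (k t - m) + G t * (k t - m) - m * (k t - m) := by
      intro t; simp only [hk]; ring
    simp only [e]
    rw [intervalIntegral.integral_sub, intervalIntegral.integral_add,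
      intervalIntegral.integral_const_mul, h1, h2]
    · have : ∫ t in (0:ℝ)..L, (k t - m) = 0 := hφL
      rw [this]; ring
    all_goals apply Continuous.intervalIntegrable; fun_prop
  refine ⟨m, fun t ht => ?_⟩
  by_contra hne
  have hne' : k t - m ≠ 0 := by
    intro h0; apply hne; simp only [hk] at h0; simp only [hG] at h0 ⊢; linarith
  have := intervalIntegral.integral_pos (f := fun t => (k t - m) ^ 2) hL
    (hkm.pow 2).continuousOn (fun x _ => sq_nonneg _) ⟨t, ht, by positivity⟩
  linarith

lemma lam_nonneg {p a b L : ℝ} (ha : 0 < a) (hb : 0 < b) (hL : 0 < L) : 0 ≤ lam1 p a b L := by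
  apply Real.sInf_nonneg
  rintro E ⟨u, u', -, -, rfl⟩
  exact intervalIntegral.integral_nonneg hL.le fun t _ => E_nonneg ha hb

lemma abs_pow_mul {p x : ℝ} (hp : 1 < p) (hx : 0 ≤ x) : |x| ^ (p - 2) * x = x ^ (p - 1) := by
  rcases hx.eq_or_lt with h | h
  · subst h; rw [Real.zero_rpow (by linarith)]; simp
  · rw [abs_of_pos h, show p - 1 = p - 2 + 1 by ring, Real.rpow_add_one h.ne']

lemma facts (p a b L l : ℝ) (hp : 1 < p) (ha : 0 < a) (hb : 0 < b) (hL : 0 < L) (hl : 0 ≤ l)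
    (u u' : ℝ → ℝ) (hu : IsWeakSol p a b L u u' (fun t => l * |u t| ^ (p - 2) * u t))
    (hupos : ∀ t ∈ Set.Ioo (0:ℝ) L, 0 < u t) :
    (∀ t ∈ Ioo (0:ℝ) L, HasDerivAt u (u' t) t) ∧
    (∀ t ∈ Ioo (0:ℝ) L, HasDerivAt (fun t => asymFlux p a b (u' t)) (-(l * u t ^ (p - 1))) t) ∧
    ContinuousOn (fun t => asymFlux p a b (u' t)) (Icc 0 L) ∧ 0 < u' 0 ∧ u' L < 0 := by
  obtain ⟨⟨⟨hd, hc⟩, hu0, huL⟩, hw⟩ := hu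
  have hd' : ∀ t ∈ Ioo (0:ℝ) L, HasDerivAt u (u' t) t := fun t ht =>
    (hd t (Ioo_subset_Icc_self ht)).hasDerivAt (Icc_mem_nhds ht.1 ht.2)
  have huc : ContinuousOn u (Icc 0 L) := fun t ht => (hd t ht).continuousWithinAt
  have hun : ∀ t ∈ Icc (0:ℝ) L, 0 ≤ u t := by
    intro t ht
    rcases ht.1.eq_or_lt with h | h
    · rw [← h, hu0]
    rcases ht.2.eq_or_lt with h' | h'
    · rw [h', huL]
    exact (hupos t ⟨h, h'⟩).le
  have hfc : ContinuousOn (fun t => asymFlux p a b (u' t)) (Icc 0 L) :=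
    (asymFlux_cont p a b hp).comp_continuousOn hc
  have hgc : ContinuousOn (fun t => l * u t ^ (p - 1)) (Icc 0 L) :=
    continuousOn_const.mul (huc.rpow_const fun t _ => Or.inr (by linarith))
  set f : ℝ → ℝ := IccExtend hL.le ((Icc 0 L).restrict (fun t => asymFlux p a b (u' t))) with hfdef
  set g : ℝ → ℝ := IccExtend hL.le ((Icc 0 L).restrict (fun t => l * u t ^ (p - 1))) with hgdef
  have hf : Continuous f := hfc.restrict.Icc_extend'
  have hg : Continuous g := hgc.restrict.Icc_extend'
  have hfe : ∀ t ∈ Icc (0:ℝ) L, f t = asymFlux p a b (u' t) := fun t ht => by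
    rw [hfdef, IccExtend_of_mem _ _ ht]; rfl
  have hge : ∀ t ∈ Icc (0:ℝ) L, g t = l * u t ^ (p - 1) := fun t ht => by
    rw [hgdef, IccExtend_of_mem _ _ ht]; rfl
  obtain ⟨m, hm⟩ := dbr L hL f g hf hg (by
    intro φ φ' hφ
    have := hw φ φ' hφ
    rw [intervalIntegral.integral_congr (g := fun t => asymFlux p a b (u' t) * φ' t),
      this]
    · apply intervalIntegral.integral_congr
      intro t ht
      rw [uIcc_of_le hL.le] at ht
      simp only [hge t ht]
      rw [mul_assoc, mul_assoc, mul_assoc, ← mul_assoc (|u t| ^ (p-2)), abs_pow_mul hp (hun t ht)]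
    · intro t ht
      rw [uIcc_of_le hL.le] at ht
      simp only [hfe t ht])
  have hGd : ∀ t, HasDerivAt (fun t => m - ∫ s in (0:ℝ)..t, g s) (-(g t)) t := fun t =>
    ((hg.integral_hasStrictDerivAt 0 t).hasDerivAt).const_sub m
  have hgn : ∀ t, 0 ≤ g t := by
    intro t
    simp only [hgdef, IccExtend, Function.comp, restrict_apply]
    exact mul_nonneg hl (Real.rpow_nonneg (hun _ (projIcc 0 L hL.le t).2) _)
  have hanti : Antitone (fun t => m - ∫ s in (0:ℝ)..t, g s) :=
    antitone_of_hasDerivAt_nonpos hGd (fun t => by simpa using hgn t)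
  have hfl : ∀ t ∈ Icc (0:ℝ) L, asymFlux p a b (u' t) = m - ∫ s in (0:ℝ)..t, g s := fun t ht => by
    rw [← hfe t ht, hm t ht]
  have h0m : (0:ℝ) ∈ Icc 0 L := ⟨le_rfl, hL.le⟩
  have hLm : L ∈ Icc 0 L := ⟨hL.le, le_rfl⟩
  have hmid : L / 2 ∈ Ioo 0 L := ⟨by linarith, by linarith⟩
  have hder : ∀ x ∈ interior (Icc (0:ℝ) L), deriv u x = u' x := by
    intro x hx; rw [interior_Icc] at hx; exact (hd' x hx).deriv
  have hdiff : DifferentiableOn ℝ u (interior (Icc (0:ℝ) L)) := by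
    intro x hx; rw [interior_Icc] at hx
    exact (hd' x hx).differentiableAt.differentiableWithinAt
  refine ⟨hd', ?_, hfc, ?_, ?_⟩
  · intro t ht
    rw [← hge t (Ioo_subset_Icc_self ht)]
    refine (hGd t).congr_of_eventuallyEq ?_
    filter_upwards [Icc_mem_nhds ht.1 ht.2] with s hs using hfl s hs
  · by_contra hn
    push Not at hn
    have hA : AntitoneOn u (Icc 0 L) := by
      apply antitoneOn_of_deriv_nonpos (convex_Icc 0 L) huc hdiff
      intro x hx
      rw [hder x hx]
      rw [interior_Icc] at hx
      by_contra hx'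
      push Not at hx'
      have h1 := flux_pos_of_pos (b := b) hp ha hx'
      have h2 : asymFlux p a b (u' 0) ≤ 0 := by
        rcases hn.eq_or_lt with h | h
        · rw [h, flux_zero hp]
        · exact (flux_neg_of_neg hp hb h).le
      rw [hfl _ (Ioo_subset_Icc_self hx)] at h1
      rw [hfl _ h0m] at h2
      have := hanti hx.1.le
      simp only at this
      linarith
    have := hA h0m (Ioo_subset_Icc_self hmid) hmid.1.le
    have := hupos _ hmid
    linarith
  · by_contra hn
    push Not at hn
    have hA : MonotoneOn u (Icc 0 L) := by
      apply monotoneOn_of_deriv_nonneg (convex_Icc 0 L) huc hdiff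
      intro x hx
      rw [hder x hx]
      rw [interior_Icc] at hx
      by_contra hx'
      push Not at hx'
      have h1 := flux_neg_of_neg (a := a) hp hb hx'
      have h2 : 0 ≤ asymFlux p a b (u' L) := by
        rcases hn.eq_or_lt with h | h
        · rw [← h, flux_zero hp]
        · exact (flux_pos_of_pos hp ha h).le
      rw [hfl _ (Ioo_subset_Icc_self hx)] at h1
      rw [hfl _ hLm] at h2
      have := hanti hx.2.le
      simp only at this
      linarith
    have := hA (Ioo_subset_Icc_self hmid) hLm hmid.2.le
    have := hupos _ hmid
    linarith

lemma ratio_lim {L e du dv : ℝ} {u v : ℝ → ℝ} (he : e ∉ Ioo 0 L) (hu0 : u e = 0) (hv0 : v e = 0)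
    (hu : HasDerivWithinAt u du (Icc 0 L) e) (hv : HasDerivWithinAt v dv (Icc 0 L) e)
    (hdv : dv ≠ 0) : Tendsto (fun t => u t / v t) (𝓝[Ioo 0 L] e) (𝓝 (du / dv)) := by
  have h1 := (hasDerivWithinAt_iff_tendsto_slope' he).1 (hu.mono Ioo_subset_Icc_self)
  have h2 := (hasDerivWithinAt_iff_tendsto_slope' he).1 (hv.mono Ioo_subset_Icc_self)
  refine (h1.div h2 hdv).congr' ?_
  filter_upwards [self_mem_nhdsWithin] with t ht
  have : t - e ≠ 0 := by
    intro h; apply he; rw [← sub_eq_zero.1 h]; exact ht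
  simp only [Pi.div_apply, slope_def_field, hu0, hv0, sub_zero]
  rw [div_div_div_cancel_right₀ this]

lemma main_const (p a b L l : ℝ) (hp : 1 < p) (ha : 0 < a) (hb : 0 < b) (hL : 0 < L) (hl : 0 ≤ l)
    (u u' v v' : ℝ → ℝ)
    (hu : IsWeakSol p a b L u u' (fun t => l * |u t| ^ (p - 2) * u t))
    (hv : IsWeakSol p a b L v v' (fun t => l * |v t| ^ (p - 2) * v t))
    (hupos : ∀ t ∈ Set.Ioo (0:ℝ) L, 0 < u t)
    (hvpos : ∀ t ∈ Set.Ioo (0:ℝ) L, 0 < v t) :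
    ∃ c : ℝ, 0 < c ∧ ∀ t ∈ Set.Icc (0:ℝ) L, u t = c * v t := by
  obtain ⟨ud, uw, uwc, -, -⟩ := facts p a b L l hp ha hb hL hl u u' hu hupos
  obtain ⟨vd, vw, vwc, v0, vL⟩ := facts p a b L l hp ha hb hL hl v v' hv hvpos
  obtain ⟨⟨⟨hud, -⟩, hu0, huL⟩, -⟩ := hu
  obtain ⟨⟨⟨hvd, -⟩, hv0, hvL⟩, -⟩ := hv
  have h0m : (0:ℝ) ∈ Icc 0 L := ⟨le_rfl, hL.le⟩
  have hLm : L ∈ Icc 0 L := ⟨hL.le, le_rfl⟩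
  set F : ℝ → ℝ := fun t => u t * (asymFlux p a b (u' t) -
    asymFlux p a b (v' t) * (u t / v t) ^ (p - 1)) with hF
  have hR : ∀ t ∈ Ioo 0 L, HasDerivAt (fun t => u t / v t)
      ((u' t * v t - u t * v' t) / v t ^ 2) t :=
    fun t ht => (ud t ht).div (vd t ht) (hvpos t ht).ne'
  set P : ℝ → ℝ := fun t => asymE p a b (u' t) - p * asymFlux p a b (u t / v t * v' t) * u' t
      + (p - 1) * ((u t / v t * v' t) * asymFlux p a b (u t / v t * v' t)) with hP
  have hFd : ∀ t ∈ Ioo 0 L, HasDerivAt F (P t) t := by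
    intro t ht
    have hut := hupos t ht
    have hvt := hvpos t ht
    have hr : 0 < u t / v t := div_pos hut hvt
    have h1 := (hR t ht).rpow_const (p := p - 1) (Or.inl hr.ne')
    have h2 := (ud t ht).mul ((uw t ht).sub ((vw t ht).mul h1))
    refine h2.congr_deriv ?_
    simp only [hP, Pi.sub_apply, Pi.mul_apply]
    rw [flux_hom hr, E_eq hp, Real.rpow_sub_one hr.ne' (p - 1), Real.div_rpow hut.le hvt.le]
    have hq : 0 < v t ^ (p - 1) := by positivity
    field_simp
    ring
  have hlim : ∀ e ∈ Icc (0:ℝ) L, e ∉ Ioo 0 L → u e = 0 → v e = 0 → v' e ≠ 0 →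
      Tendsto F (𝓝[Ioo 0 L] e) (𝓝 0) := by
    intro e he he' hue hve hve'
    have h1 := (ratio_lim he' hue hve (hud e he) (hvd e he) hve').rpow_const (p := p - 1)
      (Or.inr (by linarith))
    have h2 := ((hud e he).continuousWithinAt).tendsto.mono_left
      (nhdsWithin_mono e Ioo_subset_Icc_self)
    have h3 := (uwc e he).tendsto.mono_left (nhdsWithin_mono e Ioo_subset_Icc_self)
    have h4 := (vwc e he).tendsto.mono_left (nhdsWithin_mono e Ioo_subset_Icc_self)
    have := h2.mul (h3.sub (h4.mul h1))
    rw [hue, zero_mul] at this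
    exact this
  have hl0 := hlim 0 h0m (by simp) hu0 hv0 v0.ne'
  have hlL := hlim L hLm (by simp) huL hvL vL.ne
  rw [nhdsWithin_Ioo_eq_nhdsGT hL] at hl0
  rw [nhdsWithin_Ioo_eq_nhdsLT hL] at hlL
  have hmono : MonotoneOn F (Ioo 0 L) := by
    apply monotoneOn_of_deriv_nonneg (convex_Ioo 0 L)
    · exact fun t ht => (hFd t ht).continuousAt.continuousWithinAt
    · rw [interior_Ioo]
      exact fun t ht => (hFd t ht).differentiableAt.differentiableWithinAt
    · rw [interior_Ioo]
      intro t ht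
      rw [(hFd t ht).deriv]
      exact picone_le hp ha hb
  have hF0 : ∀ t ∈ Ioo 0 L, F t = 0 := by
    intro t ht
    apply le_antisymm
    · refine ge_of_tendsto hlL ?_
      filter_upwards [Ioo_mem_nhdsLT ht.2] with s hs
      exact hmono ht ⟨ht.1.trans hs.1, hs.2⟩ hs.1.le
    · refine le_of_tendsto hl0 ?_
      filter_upwards [Ioo_mem_nhdsGT ht.1] with s hs
      exact hmono ⟨hs.1, hs.2.trans ht.2⟩ ht hs.2.le
  have hP0 : ∀ t ∈ Ioo 0 L, P t = 0 := by
    intro t ht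
    have : HasDerivAt F 0 t := (hasDerivAt_const t (0:ℝ)).congr_of_eventuallyEq (by
      filter_upwards [Ioo_mem_nhds ht.1 ht.2] with s hs using hF0 s hs)
    exact (hFd t ht).unique this
  have hR0 : ∀ t ∈ Ioo 0 L, deriv (fun t => u t / v t) t = 0 := by
    intro t ht
    rw [(hR t ht).deriv]
    have : u' t = u t / v t * v' t := by
      by_contra hne
      have := picone_lt hp ha hb hne
      have h2 := hP0 t ht
      simp only [hP] at h2
      linarith
    rw [this]
    have hvt := (hvpos t ht).ne'
    field_simp
    ring
  have hmid : L / 2 ∈ Ioo 0 L := ⟨by linarith, by linarith⟩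
  refine ⟨u (L/2) / v (L/2), div_pos (hupos _ hmid) (hvpos _ hmid), ?_⟩
  intro t ht
  rcases ht.1.eq_or_lt with h | h
  · rw [← h, hu0, hv0, mul_zero]
  rcases ht.2.eq_or_lt with h' | h'
  · rw [h', huL, hvL, mul_zero]
  have := isOpen_Ioo.is_const_of_deriv_eq_zero isPreconnected_Ioo
    (fun t ht => (hR t ht).differentiableAt.differentiableWithinAt)
    (fun t ht => hR0 t ht) hmid (⟨h, h'⟩ : t ∈ Ioo 0 L)
  rw [this, div_mul_cancel₀ _ (hvpos t ⟨h, h'⟩).ne']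

theorem stmt4 (p a b L : ℝ) (hp : 1 < p) (ha : 0 < a) (hb : 0 < b) (hL : 0 < L)
    (u u' v v' : ℝ → ℝ)
    (hu : IsWeakSol p a b L u u' (fun t => lam1 p a b L * |u t| ^ (p - 2) * u t))
    (hv : IsWeakSol p a b L v v' (fun t => lam1 p a b L * |v t| ^ (p - 2) * v t))
    (hupos : ∀ t ∈ Set.Ioo (0:ℝ) L, 0 < u t)
    (hvpos : ∀ t ∈ Set.Ioo (0:ℝ) L, 0 < v t) :
    (∃ c : ℝ, 0 < c ∧ ∀ t ∈ Set.Icc (0:ℝ) L, v t = c * u t) ∧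
    ((∫ t in (0:ℝ)..L, |u t| ^ p) = 1 → (∫ t in (0:ℝ)..L, |v t| ^ p) = 1 →
      ∀ t ∈ Set.Icc (0:ℝ) L, u t = v t) := by
  obtain ⟨c, hc, h⟩ := main_const p a b L _ hp ha hb hL (lam_nonneg ha hb hL) v v' u u' hv hu
    hvpos hupos
  refine ⟨⟨c, hc, h⟩, fun h1 h2 => ?_⟩
  have h3 : (∫ t in (0:ℝ)..L, |v t| ^ p) = c ^ p * ∫ t in (0:ℝ)..L, |u t| ^ p := by
    rw [← intervalIntegral.integral_const_mul]
    apply intervalIntegral.integral_congr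
    intro t ht
    rw [uIcc_of_le hL.le] at ht
    simp only
    rw [h t ht, abs_mul, abs_of_pos hc, Real.mul_rpow hc.le (abs_nonneg _)]
  rw [h1, h2, mul_one] at h3
  have hc1 : c = 1 := by
    have h4 : (1:ℝ) ^ p = c ^ p := by rw [Real.one_rpow, h3]
    exact (Real.rpow_left_injOn (show p ≠ 0 by linarith) (by simp) hc.le h4).symm
  intro t ht
  rw [h t ht, hc1, one_mul]
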